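/- Let V₁, W₁ ∈ (0,1). Then the function H^max is monotonically increasing on the interval [0, π] and the function H^min is monotonically decreasing on [0, π]. Moreover, for every β ∈ ℝ one has the symmetries H^max(π − β) = H^max(π + β) and H^min(π − β) = H^min(π + β). -/

import Mathlib

/-- For parameters `V, W ∈ [0,1)`, the function
`f_{VW}(α, x) = (1 + V·cos(x + α))/(1 − W·cos α)`. -/
noncomputable def fVW (V W α x : ℝ) : ℝ :=
    (1 + V * Real.cos (x + α)) / (1 - W * Real.cos α)

/-- `f^max_{VW}(x) = sup_{α ∈ ℝ} f_{VW}(α, x)`. -/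
noncomputable def fVWmax (V W x : ℝ) : ℝ := ⨆ α : ℝ, fVW V W α x

/-- `H(x, β) = f^max_{V₁W₁}(x)/(1 + V₁·cos(x + β))`. -/
noncomputable def Hfun (V₁ W₁ x β : ℝ) : ℝ :=
    fVWmax V₁ W₁ x / (1 + V₁ * Real.cos (x + β))

/-- `H^max(β) = sup_{x ∈ ℝ} H(x, β)`. -/
noncomputable def Hmax (V₁ W₁ β : ℝ) : ℝ := ⨆ x : ℝ, Hfun V₁ W₁ x β

/-- `H^min(β) = inf_{x ∈ ℝ} H(x, β)`. -/
noncomputable def Hmin (V₁ W₁ β : ℝ) : ℝ := ⨅ x : ℝ, Hfun V₁ W₁ x β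

/-!
The function `f^max` depends only on `cos x` and increases with it, so `H(x, β)` increases with
`cos x` and decreases with `cos (x + β)`. If `0 ≤ b ≤ c ≤ π`, every `x` can be replaced by some `y`
with `cos x ≤ cos y` and `cos (y + c) ≤ cos (x + b)`: fold `x` to its representative `X` in `[0, π]`
and take the smaller of `X` and `π - c`. Hence `H^max(b) ≤ H^max(c)`. Shifting `x` and `y` by `π`
reverses both inequalities and gives the claim for `H^min`; the same replacement with angles
`π - c ≤ π - b` gives the monotonicity of `f^max` itself.
-/

open Real Set

section Trigonometry

variable {b c : ℝ}

lemma cos_arccos_cos_add_le (hb : 0 ≤ sin b) (x : ℝ) :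
    cos (arccos (cos x) + b) ≤ cos (x + b) := by
  have hcos : cos (arccos (cos x)) = cos x := cos_arccos (neg_one_le_cos x) (cos_le_one x)
  have hsin : sin (arccos (cos x)) = |sin x| := by
    rw [sin_arccos, abs_sin_eq_sqrt_one_sub_cos_sq]
  rw [cos_add, cos_add, hcos, hsin]
  gcongr
  exact le_abs_self _

lemma exists_cos_le_and_cos_add_le (hb : 0 ≤ b) (hbc : b ≤ c) (hc : c ≤ π) (x : ℝ) :
    ∃ y, cos x ≤ cos y ∧ cos (y + c) ≤ cos (x + b) := by
  have hX : 0 ≤ arccos (cos x) := arccos_nonneg _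
  have hcos : cos (arccos (cos x)) = cos x := cos_arccos (neg_one_le_cos x) (cos_le_one x)
  rcases le_total (arccos (cos x) + c) π with hXc | hXc
  · refine ⟨arccos (cos x), hcos.ge, ?_⟩
    calc cos (arccos (cos x) + c)
        ≤ cos (arccos (cos x) + b) := cos_le_cos_of_nonneg_of_le_pi (by positivity) hXc (by gcongr)
      _ ≤ cos (x + b) := cos_arccos_cos_add_le (sin_nonneg_of_nonneg_of_le_pi hb (hbc.trans hc)) x
  · refine ⟨π - c, ?_, ?_⟩
    · rw [← hcos]
      exact cos_le_cos_of_nonneg_of_le_pi (sub_nonneg.2 hc) (arccos_le_pi _) (by linarith)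
    · rw [sub_add_cancel, cos_pi]
      exact neg_one_le_cos _

lemma exists_cos_ge_and_cos_add_ge (hb : 0 ≤ b) (hbc : b ≤ c) (hc : c ≤ π) (x : ℝ) :
    ∃ y, cos y ≤ cos x ∧ cos (x + b) ≤ cos (y + c) := by
  obtain ⟨y, hxy, hyc⟩ := exists_cos_le_and_cos_add_le hb hbc hc (x + π)
  rw [cos_add_pi] at hxy
  rw [add_right_comm, cos_add_pi] at hyc
  refine ⟨y + π, ?_, ?_⟩
  · rw [cos_add_pi]
    exact neg_le.1 hxy
  · rw [add_right_comm, cos_add_pi]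
    exact le_neg.1 hyc

lemma exists_cos_le_and_cos_add_ge (hb : 0 ≤ b) (hbc : b ≤ c) (hc : c ≤ π) (x : ℝ) :
    ∃ y, cos x ≤ cos y ∧ cos (c + x) ≤ cos (b + y) := by
  obtain ⟨y, hxy, hyb⟩ := exists_cos_le_and_cos_add_le (sub_nonneg.2 hc) (sub_le_sub_left hbc π)
    (sub_le_self π hb) (-x)
  rw [show y + (π - b) = π - (b + -y) by ring, show -x + (π - c) = π - (c + x) by ring,
    cos_pi_sub, cos_pi_sub, neg_le_neg_iff] at hyb
  exact ⟨-y, by simpa only [cos_neg] using hxy, hyb⟩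

end Trigonometry

section EvenPeriodic

variable {E : Type*} {f : ℝ → E}

lemma apply_eq_of_cos_eq_cos (he : f.Even) (hp : f.Periodic (2 * π)) {x y : ℝ}
    (h : cos x = cos y) : f x = f y := by
  obtain ⟨k, rfl | rfl⟩ := cos_eq_cos_iff.1 h
  · rw [mul_comm 2, mul_assoc, add_comm, hp.int_mul k]
  · rw [mul_comm 2, mul_assoc, hp.int_mul_sub_eq k, he]

lemma apply_pi_sub_eq_apply_pi_add (he : f.Even) (hp : f.Periodic (2 * π)) (x : ℝ) :
    f (π - x) = f (π + x) :=
  apply_eq_of_cos_eq_cos he hp (by rw [cos_pi_sub, add_comm, cos_add_pi])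

lemma apply_le_apply_of_cos_le_cos [Preorder E] (hf : AntitoneOn f (Icc 0 π))
    (he : f.Even) (hp : f.Periodic (2 * π)) {x y : ℝ} (h : cos x ≤ cos y) : f x ≤ f y := by
  have fold (t : ℝ) : f t = f (arccos (cos t)) :=
    apply_eq_of_cos_eq_cos he hp (cos_arccos (neg_one_le_cos t) (cos_le_one t)).symm
  rw [fold x, fold y]
  exact hf ⟨arccos_nonneg _, arccos_le_pi _⟩ ⟨arccos_nonneg _, arccos_le_pi _⟩
    (arccos_le_arccos h)

end EvenPeriodic

section Bounds

lemma abs_mul_cos_le_abs (V t : ℝ) : |V * cos t| ≤ |V| := by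
  rw [abs_mul]
  exact mul_le_of_le_one_right (abs_nonneg V) (abs_cos_le_one t)

lemma one_add_mul_cos_le (V t : ℝ) : 1 + V * cos t ≤ 1 + |V| := by
  linarith [(abs_le.1 (abs_mul_cos_le_abs V t)).2]

lemma one_sub_abs_le_one_add_mul_cos (V t : ℝ) : 1 - |V| ≤ 1 + V * cos t := by
  linarith [(abs_le.1 (abs_mul_cos_le_abs V t)).1]

lemma one_sub_abs_le_one_sub_mul_cos (W t : ℝ) : 1 - |W| ≤ 1 - W * cos t := by
  linarith [(abs_le.1 (abs_mul_cos_le_abs W t)).2]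

lemma one_add_mul_cos_pos {V : ℝ} (hV : |V| < 1) (t : ℝ) : 0 < 1 + V * cos t :=
  (sub_pos.2 hV).trans_le (one_sub_abs_le_one_add_mul_cos V t)

lemma one_sub_mul_cos_pos {W : ℝ} (hW : |W| < 1) (t : ℝ) : 0 < 1 - W * cos t :=
  (sub_pos.2 hW).trans_le (one_sub_abs_le_one_sub_mul_cos W t)

end Bounds

section fVWmax

variable {V W : ℝ}

lemma fVW_le (V : ℝ) (hW : |W| < 1) (α x : ℝ) : fVW V W α x ≤ (1 + |V|) / (1 - |W|) :=
  div_le_div₀ (by positivity) (one_add_mul_cos_le V _) (sub_pos.2 hW)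
    (one_sub_abs_le_one_sub_mul_cos W α)

lemma bddAbove_range_fVW (V : ℝ) (hW : |W| < 1) (x : ℝ) :
    BddAbove (range fun α => fVW V W α x) :=
  ⟨_, forall_mem_range.2 fun α => fVW_le V hW α x⟩

lemma fVWmax_le (V : ℝ) (hW : |W| < 1) (x : ℝ) : fVWmax V W x ≤ (1 + |V|) / (1 - |W|) :=
  ciSup_le fun α => fVW_le V hW α x

lemma fVWmax_pos (hV : |V| < 1) (hW : |W| < 1) (x : ℝ) : 0 < fVWmax V W x :=
  (div_pos (one_add_mul_cos_pos hV (x + 0)) (one_sub_mul_cos_pos hW 0)).trans_le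
    (le_ciSup (bddAbove_range_fVW V hW x) 0)

lemma fVWmax_even (V W : ℝ) : (fVWmax V W).Even := fun x =>
  (Equiv.neg ℝ).iSup_congr fun α => by
    rw [Equiv.neg_apply, fVW, fVW, cos_neg, ← cos_neg (x + -α), neg_add, neg_neg]

lemma fVWmax_periodic (V W : ℝ) : (fVWmax V W).Periodic (2 * π) := fun x =>
  iSup_congr fun α => by rw [fVW, fVW, add_right_comm, cos_add_two_pi]

lemma fVW_le_fVW (hV₀ : 0 ≤ V) (hV : |V| < 1) (hW₀ : 0 ≤ W) (hW : |W| < 1) {α α' x x' : ℝ}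
    (hα : cos α ≤ cos α') (hx : cos (x + α) ≤ cos (x' + α')) :
    fVW V W α x ≤ fVW V W α' x' :=
  div_le_div₀ (one_add_mul_cos_pos hV _).le (by gcongr) (one_sub_mul_cos_pos hW _) (by gcongr)

lemma fVWmax_antitoneOn (hV₀ : 0 ≤ V) (hV : |V| < 1) (hW₀ : 0 ≤ W) (hW : |W| < 1) :
    AntitoneOn (fVWmax V W) (Icc 0 π) := fun x hx _ hy hxy =>
  ciSup_mono_of_forall_exists (bddAbove_range_fVW V hW x) fun α =>
    let ⟨α', hα, hα'⟩ := exists_cos_le_and_cos_add_ge hx.1 hxy hy.2 α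
    ⟨α', fVW_le_fVW hV₀ hV hW₀ hW hα hα'⟩

lemma fVWmax_le_fVWmax (hV₀ : 0 ≤ V) (hV : |V| < 1) (hW₀ : 0 ≤ W) (hW : |W| < 1) {x y : ℝ}
    (h : cos x ≤ cos y) : fVWmax V W x ≤ fVWmax V W y :=
  apply_le_apply_of_cos_le_cos (fVWmax_antitoneOn hV₀ hV hW₀ hW) (fVWmax_even V W)
    (fVWmax_periodic V W) h

end fVWmax

section Hfun

variable {V W : ℝ}

lemma Hfun_neg_neg (V W x β : ℝ) : Hfun V W (-x) (-β) = Hfun V W x β := by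
  rw [Hfun, Hfun, fVWmax_even, ← neg_add, cos_neg]

lemma Hfun_periodic (V W x : ℝ) : (Hfun V W x).Periodic (2 * π) := fun β => by
  rw [Hfun, Hfun, ← add_assoc, cos_add_two_pi]

lemma Hfun_nonneg (hV : |V| < 1) (hW : |W| < 1) (x β : ℝ) : 0 ≤ Hfun V W x β :=
  div_nonneg (fVWmax_pos hV hW x).le (one_add_mul_cos_pos hV _).le

lemma Hfun_le (hV : |V| < 1) (hW : |W| < 1) (x β : ℝ) :
    Hfun V W x β ≤ (1 + |V|) / (1 - |W|) / (1 - |V|) :=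
  div_le_div₀ (div_nonneg (by positivity) (sub_pos.2 hW).le) (fVWmax_le V hW x) (sub_pos.2 hV)
    (one_sub_abs_le_one_add_mul_cos V _)

lemma bddAbove_range_Hfun (hV : |V| < 1) (hW : |W| < 1) (β : ℝ) :
    BddAbove (range fun x => Hfun V W x β) :=
  ⟨_, forall_mem_range.2 fun x => Hfun_le hV hW x β⟩

lemma bddBelow_range_Hfun (hV : |V| < 1) (hW : |W| < 1) (β : ℝ) :
    BddBelow (range fun x => Hfun V W x β) :=
  ⟨0, forall_mem_range.2 fun x => Hfun_nonneg hV hW x β⟩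

lemma Hfun_le_Hfun (hV₀ : 0 ≤ V) (hV : |V| < 1) (hW₀ : 0 ≤ W) (hW : |W| < 1) {x y b c : ℝ}
    (hxy : cos x ≤ cos y) (hbc : cos (y + c) ≤ cos (x + b)) :
    Hfun V W x b ≤ Hfun V W y c :=
  div_le_div₀ (fVWmax_pos hV hW y).le (fVWmax_le_fVWmax hV₀ hV hW₀ hW hxy)
    (one_add_mul_cos_pos hV _) (by gcongr)

end Hfun

section Extrema

variable {V W : ℝ}

lemma Hmax_even (V W : ℝ) : (Hmax V W).Even := fun β =>
  (Equiv.neg ℝ).iSup_congr fun x => by rw [Equiv.neg_apply, ← Hfun_neg_neg, neg_neg]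

lemma Hmin_even (V W : ℝ) : (Hmin V W).Even := fun β =>
  (Equiv.neg ℝ).iInf_congr fun x => by rw [Equiv.neg_apply, ← Hfun_neg_neg, neg_neg]

lemma Hmax_periodic (V W : ℝ) : (Hmax V W).Periodic (2 * π) := fun β =>
  iSup_congr fun x => Hfun_periodic V W x β

lemma Hmin_periodic (V W : ℝ) : (Hmin V W).Periodic (2 * π) := fun β =>
  iInf_congr fun x => Hfun_periodic V W x β

lemma Hmax_monotoneOn (hV₀ : 0 ≤ V) (hV : |V| < 1) (hW₀ : 0 ≤ W) (hW : |W| < 1) :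
    MonotoneOn (Hmax V W) (Icc 0 π) := fun _ hb c hc hbc =>
  ciSup_mono_of_forall_exists (bddAbove_range_Hfun hV hW c) fun x =>
    let ⟨y, hxy, hyc⟩ := exists_cos_le_and_cos_add_le hb.1 hbc hc.2 x
    ⟨y, Hfun_le_Hfun hV₀ hV hW₀ hW hxy hyc⟩

lemma Hmin_antitoneOn (hV₀ : 0 ≤ V) (hV : |V| < 1) (hW₀ : 0 ≤ W) (hW : |W| < 1) :
    AntitoneOn (Hmin V W) (Icc 0 π) := fun _ hb c hc hbc =>
  ciInf_mono_of_forall_exists (bddBelow_range_Hfun hV hW c) fun x =>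
    let ⟨y, hyx, hxb⟩ := exists_cos_ge_and_cos_add_ge hb.1 hbc hc.2 x
    ⟨y, Hfun_le_Hfun hV₀ hV hW₀ hW hyx hxb⟩

end Extrema

/-- For `V₁, W₁ ∈ (0,1)`, `H^max` is monotonically increasing
on `[0, π]` and `H^min` is monotonically decreasing on `[0, π]`; moreover, for
every `β ∈ ℝ`, `H^max(π − β) = H^max(π + β)` and `H^min(π − β) = H^min(π + β)`. -/
theorem Hmax_monotone_Hmin_antitone (V₁ W₁ : ℝ)
    (hV : V₁ ∈ Set.Ioo (0 : ℝ) 1) (hW : W₁ ∈ Set.Ioo (0 : ℝ) 1) :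
    MonotoneOn (Hmax V₁ W₁) (Set.Icc 0 Real.pi) ∧
    AntitoneOn (Hmin V₁ W₁) (Set.Icc 0 Real.pi) ∧
    (∀ β : ℝ, Hmax V₁ W₁ (Real.pi - β) = Hmax V₁ W₁ (Real.pi + β)) ∧
    (∀ β : ℝ, Hmin V₁ W₁ (Real.pi - β) = Hmin V₁ W₁ (Real.pi + β)) := by
  have hV' : |V₁| < 1 := (abs_of_pos hV.1).trans_lt hV.2
  have hW' : |W₁| < 1 := (abs_of_pos hW.1).trans_lt hW.2
  exact ⟨Hmax_monotoneOn hV.1.le hV' hW.1.le hW', Hmin_antitoneOn hV.1.le hV' hW.1.le hW',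
    apply_pi_sub_eq_apply_pi_add (Hmax_even V₁ W₁) (Hmax_periodic V₁ W₁),
    apply_pi_sub_eq_apply_pi_add (Hmin_even V₁ W₁) (Hmin_periodic V₁ W₁)⟩
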